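/- If d is not divisible by ℓ (where q is a primitive ℓ-th root of unity, ℓ > 1 odd, so that (d)_{q²} ≠ 0), then the quantum de Rham complex 0 → S_q^d(n) → S_q^{d−1}(n) ⊗ Λ_q^1(n) → ⋯ → Λ_q^d(n) → 0 is exact. -/

import Mathlib

/-- Generators of the algebra `Ω(n) = S_q(V_n) ⊗ Λ_q(V_n)`: `Sum.inl i` stands for
`x_i = e_i ⊗ 1` (symmetric generator) and `Sum.inr i` for `y_i = 1 ⊗ e_i` (exterior
generator). -/
abbrev OmegaLetter (n : ℕ) := Fin n ⊕ Fin n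

/-- The defining relations of the algebra `Ω(n) = S_q(V_n) ⊗ Λ_q(V_n)` with product
twisted by the braiding (quantum de Rham algebra). -/
inductive omegaRel (K : Type*) [Field K] (q : K) (n : ℕ) :
    FreeAlgebra K (OmegaLetter n) → FreeAlgebra K (OmegaLetter n) → Prop
  | xx {i j : Fin n} (h : j < i) :
      omegaRel K q n (FreeAlgebra.ι K (Sum.inl i) * FreeAlgebra.ι K (Sum.inl j))
        (q • (FreeAlgebra.ι K (Sum.inl j) * FreeAlgebra.ι K (Sum.inl i)))
  | yx_gt {i j : Fin n} (h : j < i) :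
      omegaRel K q n (FreeAlgebra.ι K (Sum.inr j) * FreeAlgebra.ι K (Sum.inl i))
        (FreeAlgebra.ι K (Sum.inl i) * FreeAlgebra.ι K (Sum.inr j))
  | yx_eq (i : Fin n) :
      omegaRel K q n (FreeAlgebra.ι K (Sum.inr i) * FreeAlgebra.ι K (Sum.inl i))
        (q • (FreeAlgebra.ι K (Sum.inl i) * FreeAlgebra.ι K (Sum.inr i)))
  | yx_lt {i j : Fin n} (h : i < j) :
      omegaRel K q n (FreeAlgebra.ι K (Sum.inr j) * FreeAlgebra.ι K (Sum.inl i))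
        ((q - q⁻¹) • (FreeAlgebra.ι K (Sum.inl j) * FreeAlgebra.ι K (Sum.inr i)) +
          FreeAlgebra.ι K (Sum.inl i) * FreeAlgebra.ι K (Sum.inr j))
  | yy {i j : Fin n} (h : j < i) :
      omegaRel K q n (FreeAlgebra.ι K (Sum.inr i) * FreeAlgebra.ι K (Sum.inr j))
        ((-q⁻¹) • (FreeAlgebra.ι K (Sum.inr j) * FreeAlgebra.ι K (Sum.inr i)))
  | ysq (i : Fin n) :
      omegaRel K q n (FreeAlgebra.ι K (Sum.inr i) * FreeAlgebra.ι K (Sum.inr i)) 0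

/-- The algebra `Ω(n) = S_q(V_n) ⊗ Λ_q(V_n)` with braided product, presented by
generators and relations. -/
abbrev OmegaAlg (K : Type*) [Field K] (q : K) (n : ℕ) := RingQuot (omegaRel K q n)

namespace OmegaAlg

variable (K : Type*) [Field K] (q : K) (n : ℕ)

/-- The generators of `Ω(n)`. -/
noncomputable def gen (g : OmegaLetter n) : OmegaAlg K q n :=
  RingQuot.mkAlgHom K (omegaRel K q n) (FreeAlgebra.ι K g)

/-- The symmetric generator `x_i = e_i ⊗ 1`. -/
noncomputable def X (i : Fin n) : OmegaAlg K q n := gen K q n (Sum.inl i)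

/-- The exterior generator `y_i = 1 ⊗ e_i`. -/
noncomputable def Y (i : Fin n) : OmegaAlg K q n := gen K q n (Sum.inr i)

/-- The image in `Ω(n)` of a word in the generators. -/
noncomputable def wordProd (w : List (OmegaLetter n)) : OmegaAlg K q n :=
  (w.map (gen K q n)).prod

/-- The number of symmetric letters `x` in a word. -/
def countX (w : List (OmegaLetter n)) : ℕ := (w.filter Sum.isLeft).length

/-- The number of exterior letters `y` in a word. -/
def countY (w : List (OmegaLetter n)) : ℕ := (w.filter Sum.isRight).length

/-- The bigraded piece `Ω^i_d(n) = S_q^{d-i}(n) ⊗ Λ_q^i(n)`: the span of the words with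
`d` letters, `i` of which are exterior. -/
noncomputable def piece (i d : ℕ) : Submodule K (OmegaAlg K q n) :=
  Submodule.span K {a : OmegaAlg K q n | ∃ w : List (OmegaLetter n),
    w.length = d ∧ countY n w = i ∧ a = wordProd K q n w}

/-- The property that `δ` is the quantum de Rham differential: on the word monomials of
`Ω(n)` it deconcatenates one symmetric letter (with the appropriate braiding twist) and
multiplies it into the exterior factor, replacing one `x`-letter by the corresponding
`y`-letter. -/
def IsDeRham (δ : OmegaAlg K q n →ₗ[K] OmegaAlg K q n) : Prop :=
  ∀ w : List (OmegaLetter n),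
    δ (wordProd K q n w) =
      ∑ k : Fin w.length,
        Sum.elim
          (fun i : Fin n =>
            ((-q⁻¹) ^ countY n (w.take k) * q ^ countX n (w.drop (k + 1))) •
              wordProd K q n (w.set k (Sum.inr i)))
          (fun _ : Fin n => (0 : OmegaAlg K q n))
          (w.get k)

/-- The property that `κ` is the quantum Koszul differential: on the word monomials of
`Ω(n)` it deconcatenates one exterior letter (with the appropriate braiding twist) and
multiplies it into the symmetric factor, replacing one `y`-letter by the corresponding
`x`-letter. -/
def IsKoszul (κ : OmegaAlg K q n →ₗ[K] OmegaAlg K q n) : Prop :=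
  ∀ w : List (OmegaLetter n),
    κ (wordProd K q n w) =
      ∑ k : Fin w.length,
        Sum.elim
          (fun _ : Fin n => (0 : OmegaAlg K q n))
          (fun i : Fin n =>
            ((-q⁻¹) ^ countY n (w.take k) * q ^ countX n (w.drop (k + 1))) •
              wordProd K q n (w.set k (Sum.inl i)))
          (w.get k)

end OmegaAlg

/-!
The differential obeys the twisted Leibniz rules `δ (x a) = y σ(a) + x δ(a)` and
`δ (y a) = -q⁻¹ y δ(a)`, where `σ` is the automorphism scaling the symmetric generators by `q`.
The Koszul differential `κ` goes the other way and obeys `κ (x a) = x κ(a)` and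
`κ (y a) = x σ(a) - q⁻¹ y κ(a)`. Hence `L = κ δ + q⁻² δ κ` satisfies
`L (x a) = x (σ² a + L a)` and `L (y a) = q⁻² y (σ² a + L a)`, and induction on words shows that it
acts on `Ω^i_d(n)` as the scalar `q⁻²ⁱ (d)_{q²}`. When this scalar is nonzero, `κ` is, up to
scaling, a contracting homotopy.
-/

theorem geom_sum_ne_zero_of_not_dvd {R : Type*} [CommRing R] {ζ : R} {k d : ℕ}
    (hζ : IsPrimitiveRoot ζ k) (hd : ¬ k ∣ d) : ∑ t ∈ Finset.range d, ζ ^ t ≠ 0 := by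
  intro h
  have hpow : ζ ^ d = 1 := by
    rw [← sub_eq_zero, ← geom_sum_mul, h, zero_mul]
  exact hd (hζ.dvd_of_pow_eq_one d hpow)

theorem inv_pow_mul_geom_sum_succ {F : Type*} [DivisionRing F] {r : F} (hr : r ≠ 0) (a b : ℕ) :
    r⁻¹ ^ b * ∑ t ∈ Finset.range (a + b + 1), r ^ t =
      r ^ a + r⁻¹ ^ b * ∑ t ∈ Finset.range (a + b), r ^ t := by
  have hcancel : r⁻¹ ^ b * r ^ (a + b) = r ^ a := by
    rw [add_comm a, pow_add, inv_pow, inv_mul_cancel_left₀ (pow_ne_zero b hr)]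
  rw [Finset.sum_range_succ, mul_add, hcancel, add_comm]

section LowerTriangular

variable {A : Type*}

/-- The lower triangular matrix with diagonal `a, c` and off-diagonal entry `b`; the off-diagonal
entries of products of such matrices follow a twisted Leibniz rule. -/
def lowerTriangular [Zero A] (a b c : A) : Matrix (Fin 2) (Fin 2) A :=
  !![a, 0; b, c]

theorem lowerTriangular_zero [Zero A] : lowerTriangular (0 : A) 0 0 = 0 :=
  (Matrix.eta_fin_two 0).symm

theorem lowerTriangular_add [AddZeroClass A] (a b c a' b' c' : A) :
    lowerTriangular a b c + lowerTriangular a' b' c' =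
      lowerTriangular (a + a') (b + b') (c + c') := by
  simp [lowerTriangular]

theorem smul_lowerTriangular {S : Type*} [Zero A] [SMulZeroClass S A] (s : S) (a b c : A) :
    s • lowerTriangular a b c = lowerTriangular (s • a) (s • b) (s • c) := by
  simp [lowerTriangular]

theorem lowerTriangular_mul [NonUnitalNonAssocSemiring A] (a b c a' b' c' : A) :
    lowerTriangular a b c * lowerTriangular a' b' c' =
      lowerTriangular (a * a') (b * a' + c * b') (c * c') := by
  simp [lowerTriangular]

theorem lowerTriangular_mul_apply_zero [NonUnitalNonAssocSemiring A] (a b c : A)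
    (M : Matrix (Fin 2) (Fin 2) A) (j : Fin 2) : (lowerTriangular a b c * M) 0 j = a * M 0 j := by
  simp [lowerTriangular, Matrix.mul_apply]

theorem lowerTriangular_mul_apply_one [NonUnitalNonAssocSemiring A] (a b c : A)
    (M : Matrix (Fin 2) (Fin 2) A) (j : Fin 2) :
    (lowerTriangular a b c * M) 1 j = b * M 0 j + c * M 1 j := by
  simp [lowerTriangular, Matrix.mul_apply]

end LowerTriangular

namespace OmegaAlg

variable {K : Type*} [Field K] {q : K} {n : ℕ}

section Relations

theorem X_mul_X {i j : Fin n} (h : j < i) :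
    X K q n i * X K q n j = q • (X K q n j * X K q n i) := by
  simpa only [map_mul, map_smul, X, gen] using RingQuot.mkAlgHom_rel K (omegaRel.xx (q := q) h)

theorem Y_mul_X_of_lt {i j : Fin n} (h : j < i) :
    Y K q n j * X K q n i = X K q n i * Y K q n j := by
  simpa only [map_mul, X, Y, gen] using RingQuot.mkAlgHom_rel K (omegaRel.yx_gt (q := q) h)

theorem Y_mul_X_self (i : Fin n) : Y K q n i * X K q n i = q • (X K q n i * Y K q n i) := by
  simpa only [map_mul, map_smul, X, Y, gen] using
    RingQuot.mkAlgHom_rel K (omegaRel.yx_eq (q := q) i)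

theorem Y_mul_X_of_gt {i j : Fin n} (h : i < j) :
    Y K q n j * X K q n i =
      (q - q⁻¹) • (X K q n j * Y K q n i) + X K q n i * Y K q n j := by
  simpa only [map_mul, map_add, map_smul, X, Y, gen] using
    RingQuot.mkAlgHom_rel K (omegaRel.yx_lt (q := q) h)

theorem Y_mul_Y {i j : Fin n} (h : j < i) :
    Y K q n i * Y K q n j = (-q⁻¹) • (Y K q n j * Y K q n i) := by
  simpa only [map_mul, map_smul, Y, gen] using RingQuot.mkAlgHom_rel K (omegaRel.yy (q := q) h)

theorem Y_mul_self (i : Fin n) : Y K q n i * Y K q n i = 0 := by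
  simpa only [map_mul, map_zero, Y, gen] using RingQuot.mkAlgHom_rel K (omegaRel.ysq (q := q) i)

end Relations

section Words

@[simp]
theorem countX_inl_cons (i : Fin n) (w : List (OmegaLetter n)) :
    countX n (Sum.inl i :: w) = countX n w + 1 :=
  rfl

@[simp]
theorem countX_inr_cons (i : Fin n) (w : List (OmegaLetter n)) :
    countX n (Sum.inr i :: w) = countX n w :=
  rfl

@[simp]
theorem countY_inl_cons (i : Fin n) (w : List (OmegaLetter n)) :
    countY n (Sum.inl i :: w) = countY n w :=
  rfl

@[simp]
theorem countY_inr_cons (i : Fin n) (w : List (OmegaLetter n)) :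
    countY n (Sum.inr i :: w) = countY n w + 1 :=
  rfl

theorem countX_add_countY (w : List (OmegaLetter n)) : countX n w + countY n w = w.length := by
  induction w with
  | nil => rfl
  | cons g w ih =>
    cases g <;>
      simp only [countX_inl_cons, countX_inr_cons, countY_inl_cons, countY_inr_cons,
        List.length_cons, ← ih] <;>
      omega

@[simp]
theorem wordProd_nil : wordProd K q n [] = 1 :=
  rfl

theorem wordProd_cons (g : OmegaLetter n) (w : List (OmegaLetter n)) :
    wordProd K q n (g :: w) = gen K q n g * wordProd K q n w :=
  List.prod_cons

@[simp]
theorem wordProd_inl_cons (i : Fin n) (w : List (OmegaLetter n)) :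
    wordProd K q n (Sum.inl i :: w) = X K q n i * wordProd K q n w :=
  wordProd_cons _ w

@[simp]
theorem wordProd_inr_cons (i : Fin n) (w : List (OmegaLetter n)) :
    wordProd K q n (Sum.inr i :: w) = Y K q n i * wordProd K q n w :=
  wordProd_cons _ w

theorem adjoin_range_gen : Algebra.adjoin K (Set.range (gen K q n)) = ⊤ := by
  have hrange : Set.range (gen K q n) =
      RingQuot.mkAlgHom K (omegaRel K q n) '' Set.range (FreeAlgebra.ι K) :=
    Set.range_comp _ _
  rw [hrange, ← AlgHom.map_adjoin, FreeAlgebra.adjoin_range_ι, Algebra.map_top,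
    AlgHom.range_eq_top]
  exact RingQuot.mkAlgHom_surjective K (omegaRel K q n)

theorem span_range_wordProd : Submodule.span K (Set.range (wordProd K q n)) = ⊤ := by
  have hclosure : (Submonoid.closure (Set.range (gen K q n)) : Set (OmegaAlg K q n)) =
      Set.range (wordProd K q n) := by
    rw [← FreeMonoid.mrange_lift, MonoidHom.coe_mrange]
    exact congrArg Set.range (funext fun w => FreeMonoid.lift_apply _ _)
  rw [← hclosure, ← Algebra.adjoin_eq_span, adjoin_range_gen, Algebra.top_toSubmodule]

theorem linearMap_ext {M : Type*} [AddCommMonoid M] [Module K M] {f g : OmegaAlg K q n →ₗ[K] M}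
    (h : ∀ w, f (wordProd K q n w) = g (wordProd K q n w)) : f = g :=
  LinearMap.ext_on_range span_range_wordProd h

theorem wordProd_mem_piece (w : List (OmegaLetter n)) :
    wordProd K q n w ∈ piece K q n (countY n w) w.length :=
  Submodule.subset_span ⟨w, rfl, rfl, rfl⟩

theorem piece_le {i d : ℕ} {N : Submodule K (OmegaAlg K q n)}
    (h : ∀ w : List (OmegaLetter n), w.length = d → countY n w = i → wordProd K q n w ∈ N) :
    piece K q n i d ≤ N :=
  Submodule.span_le.2 fun _ ⟨w, hlength, hcount, hw⟩ => hw ▸ h w hlength hcount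

theorem X_mul_mem_piece {i d : ℕ} {a : OmegaAlg K q n} (ha : a ∈ piece K q n i d) (j : Fin n) :
    X K q n j * a ∈ piece K q n i (d + 1) := by
  suffices piece K q n i d ≤ (piece K q n i (d + 1)).comap (LinearMap.mulLeft K (X K q n j)) from
    this ha
  refine piece_le ?_
  rintro w rfl rfl
  exact wordProd_mem_piece (Sum.inl j :: w)

theorem Y_mul_mem_piece {i d : ℕ} {a : OmegaAlg K q n} (ha : a ∈ piece K q n i d) (j : Fin n) :
    Y K q n j * a ∈ piece K q n (i + 1) (d + 1) := by
  suffices piece K q n i d ≤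
      (piece K q n (i + 1) (d + 1)).comap (LinearMap.mulLeft K (Y K q n j)) from this ha
  refine piece_le ?_
  rintro w rfl rfl
  exact wordProd_mem_piece (Sum.inr j :: w)

end Words

section Koszul

variable (K q n) in
/-- The values on the generators of the representation `OmegaAlg.koszulMatrix`. -/
noncomputable def koszulMatrixGen : OmegaLetter n → Matrix (Fin 2) (Fin 2) (OmegaAlg K q n) :=
  Sum.elim (fun i => lowerTriangular (q • X K q n i) 0 (X K q n i))
    (fun i => lowerTriangular (Y K q n i) (X K q n i) ((-q⁻¹) • Y K q n i))

theorem lift_koszulMatrixGen_eq_of_rel (hq : q ≠ 0) ⦃a b : FreeAlgebra K (OmegaLetter n)⦄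
    (h : omegaRel K q n a b) :
    FreeAlgebra.lift K (koszulMatrixGen K q n) a =
      FreeAlgebra.lift K (koszulMatrixGen K q n) b := by
  cases h <;>
    simp only [map_mul, map_add, map_smul, map_zero, FreeAlgebra.lift_ι_apply, koszulMatrixGen,
      Sum.elim_inl, Sum.elim_inr, lowerTriangular_mul, smul_lowerTriangular, lowerTriangular_add,
      smul_mul_assoc, mul_smul_comm, zero_mul, mul_zero, add_zero, zero_add, smul_zero]
  case xx h => rw [X_mul_X h]
  case yx_gt h => rw [X_mul_X h, Y_mul_X_of_lt h]
  case yx_eq i => rw [Y_mul_X_self, smul_comm q (-q⁻¹)]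
  case yx_lt i j h =>
    have hκ : q • (X K q n j * X K q n i) =
        (q - q⁻¹) • (X K q n j * X K q n i) + X K q n i * X K q n j := by
      rw [X_mul_X h]
      match_scalars
      field_simp
      ring
    rw [← hκ, Y_mul_X_of_gt h]
    congr 1 <;> module
  case yy i j h =>
    have hκ : X K q n i * Y K q n j + (-q⁻¹) • (Y K q n i * X K q n j) =
        (-q⁻¹) • (X K q n j * Y K q n i + (-q⁻¹) • (Y K q n j * X K q n i)) := by
      rw [Y_mul_X_of_gt h, Y_mul_X_of_lt h]
      match_scalars
      · field_simp
        ring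
      · ring
    rw [hκ, Y_mul_Y h]
  case ysq i =>
    have hκ : X K q n i * Y K q n i + (-q⁻¹) • (Y K q n i * X K q n i) = 0 := by
      rw [Y_mul_X_self, smul_smul, neg_mul, inv_mul_cancel₀ hq, neg_one_smul, add_neg_cancel]
    rw [hκ, Y_mul_self, smul_zero, smul_zero, lowerTriangular_zero]

/-- The representation of `Ω(n)` by lower triangular matrices `!![σ a, 0; κ a, τ a]`, where `σ` and
`τ` are diagonal automorphisms. Its multiplicativity is the twisted Leibniz rule
`κ (a b) = κ a * σ b + τ a * κ b`, so that `κ` is well defined on `Ω(n)` as soon as the matrices of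
the generators satisfy the defining relations. -/
noncomputable def koszulMatrix (hq : q ≠ 0) :
    OmegaAlg K q n →ₐ[K] Matrix (Fin 2) (Fin 2) (OmegaAlg K q n) :=
  RingQuot.liftAlgHom K ⟨FreeAlgebra.lift K (koszulMatrixGen K q n),
    lift_koszulMatrixGen_eq_of_rel hq⟩

theorem koszulMatrix_gen (hq : q ≠ 0) (g : OmegaLetter n) :
    koszulMatrix hq (gen K q n g) = koszulMatrixGen K q n g := by
  rw [koszulMatrix, gen, RingQuot.liftAlgHom_mkAlgHom_apply, FreeAlgebra.lift_ι_apply]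

theorem koszulMatrix_X (hq : q ≠ 0) (i : Fin n) :
    koszulMatrix hq (X K q n i) = lowerTriangular (q • X K q n i) 0 (X K q n i) :=
  koszulMatrix_gen hq (Sum.inl i)

theorem koszulMatrix_Y (hq : q ≠ 0) (i : Fin n) :
    koszulMatrix hq (Y K q n i) =
      lowerTriangular (Y K q n i) (X K q n i) ((-q⁻¹) • Y K q n i) :=
  koszulMatrix_gen hq (Sum.inr i)

/-- The automorphism `σ` of `Ω(n)` that multiplies each `x_i` by `q` and fixes each `y_i`, as a
linear map. -/
noncomputable def scaleX (hq : q ≠ 0) : OmegaAlg K q n →ₗ[K] OmegaAlg K q n :=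
  Matrix.entryLinearMap K _ 0 0 ∘ₗ (koszulMatrix hq).toLinearMap

/-- The quantum Koszul differential `κ`, the twisted derivation with `x_i ↦ 0` and `y_i ↦ x_i`. -/
noncomputable def koszul (hq : q ≠ 0) : OmegaAlg K q n →ₗ[K] OmegaAlg K q n :=
  Matrix.entryLinearMap K _ 1 0 ∘ₗ (koszulMatrix hq).toLinearMap

variable (hq : q ≠ 0)

theorem scaleX_apply (a : OmegaAlg K q n) : scaleX hq a = koszulMatrix hq a 0 0 :=
  rfl

theorem koszul_apply (a : OmegaAlg K q n) : koszul hq a = koszulMatrix hq a 1 0 :=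
  rfl

@[simp]
theorem scaleX_one : scaleX hq (1 : OmegaAlg K q n) = 1 := by
  rw [scaleX_apply, map_one, Matrix.one_apply_eq]

@[simp]
theorem koszul_one : koszul hq (1 : OmegaAlg K q n) = 0 := by
  rw [koszul_apply, map_one, Matrix.one_apply_ne one_ne_zero]

theorem scaleX_X_mul (i : Fin n) (a : OmegaAlg K q n) :
    scaleX hq (X K q n i * a) = q • (X K q n i * scaleX hq a) := by
  rw [scaleX_apply, map_mul, koszulMatrix_X, lowerTriangular_mul_apply_zero, smul_mul_assoc,
    scaleX_apply]

theorem scaleX_Y_mul (i : Fin n) (a : OmegaAlg K q n) :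
    scaleX hq (Y K q n i * a) = Y K q n i * scaleX hq a := by
  rw [scaleX_apply, map_mul, koszulMatrix_Y, lowerTriangular_mul_apply_zero, scaleX_apply]

theorem koszul_X_mul (i : Fin n) (a : OmegaAlg K q n) :
    koszul hq (X K q n i * a) = X K q n i * koszul hq a := by
  rw [koszul_apply, map_mul, koszulMatrix_X, lowerTriangular_mul_apply_one, zero_mul, zero_add,
    koszul_apply]

theorem koszul_Y_mul (i : Fin n) (a : OmegaAlg K q n) :
    koszul hq (Y K q n i * a) =
      X K q n i * scaleX hq a + (-q⁻¹) • (Y K q n i * koszul hq a) := by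
  rw [koszul_apply, map_mul, koszulMatrix_Y, lowerTriangular_mul_apply_one, smul_mul_assoc,
    scaleX_apply, koszul_apply]

theorem scaleX_wordProd (w : List (OmegaLetter n)) :
    scaleX hq (wordProd K q n w) = q ^ countX n w • wordProd K q n w := by
  induction w with
  | nil => simp [countX]
  | cons g w ih => cases g <;> simp [scaleX_X_mul, scaleX_Y_mul, ih, smul_smul, pow_succ']

theorem scaleX_koszul (a : OmegaAlg K q n) :
    scaleX hq (koszul hq a) = q • koszul hq (scaleX hq a) := by
  suffices scaleX hq ∘ₗ koszul hq = q • koszul (n := n) hq ∘ₗ scaleX hq from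
    LinearMap.congr_fun this a
  refine linearMap_ext fun w => ?_
  simp only [LinearMap.comp_apply, LinearMap.smul_apply]
  induction w with
  | nil => simp
  | cons g w ih =>
    cases g with
    | inl i =>
      simp only [wordProd_inl_cons, scaleX_X_mul, koszul_X_mul, map_smul, ih, mul_smul_comm]
    | inr i =>
      simp only [wordProd_inr_cons, scaleX_X_mul, scaleX_Y_mul, koszul_Y_mul, map_add, map_smul,
        ih, mul_smul_comm]
      module

theorem koszul_wordProd_eq_zero {w : List (OmegaLetter n)} (hw : countY n w = 0) :
    koszul hq (wordProd K q n w) = 0 := by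
  induction w with
  | nil => exact koszul_one hq
  | cons g w ih =>
    cases g with
    | inl j => rw [wordProd_inl_cons, koszul_X_mul, ih hw, mul_zero]
    | inr j => exact absurd hw (Nat.succ_ne_zero _)

theorem koszul_eq_zero_of_mem_piece_zero {d : ℕ} {a : OmegaAlg K q n}
    (ha : a ∈ piece K q n 0 d) : koszul hq a = 0 := by
  suffices piece K q n 0 d ≤ LinearMap.ker (koszul hq) from this ha
  exact piece_le fun w _ hw => koszul_wordProd_eq_zero hq hw

theorem koszul_wordProd_mem_piece {i : ℕ} {w : List (OmegaLetter n)} (hw : countY n w = i + 1) :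
    koszul hq (wordProd K q n w) ∈ piece K q n i w.length := by
  induction w generalizing i with
  | nil => exact absurd hw.symm (Nat.succ_ne_zero i)
  | cons g w ih =>
    cases g with
    | inl j =>
      rw [wordProd_inl_cons, koszul_X_mul]
      exact X_mul_mem_piece (ih hw) j
    | inr j =>
      obtain rfl : countY n w = i := Nat.succ.inj hw
      rw [wordProd_inr_cons, koszul_Y_mul, scaleX_wordProd, mul_smul_comm]
      refine add_mem (Submodule.smul_mem _ _ (X_mul_mem_piece (wordProd_mem_piece w) j))
        (Submodule.smul_mem _ _ ?_)
      cases hcount : countY n w with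
      | zero =>
        rw [koszul_wordProd_eq_zero hq hcount, mul_zero]
        exact zero_mem _
      | succ m => exact Y_mul_mem_piece (ih hcount) j

theorem koszul_mem_piece {i d : ℕ} {a : OmegaAlg K q n} (ha : a ∈ piece K q n (i + 1) d) :
    koszul hq a ∈ piece K q n i d := by
  suffices piece K q n (i + 1) d ≤ (piece K q n i d).comap (koszul hq) from this ha
  refine piece_le ?_
  rintro w rfl hw
  exact koszul_wordProd_mem_piece hq hw

end Koszul

section DeRham

variable {δ : OmegaAlg K q n →ₗ[K] OmegaAlg K q n}

theorem IsDeRham.map_one (hδ : IsDeRham K q n δ) : δ 1 = 0 :=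
  hδ []

theorem IsDeRham.map_X_mul (hδ : IsDeRham K q n δ) (hq : q ≠ 0) (i : Fin n)
    (a : OmegaAlg K q n) :
    δ (X K q n i * a) = Y K q n i * scaleX hq a + X K q n i * δ a := by
  suffices δ ∘ₗ LinearMap.mulLeft K (X K q n i) =
      LinearMap.mulLeft K (Y K q n i) ∘ₗ scaleX hq + LinearMap.mulLeft K (X K q n i) ∘ₗ δ from
    LinearMap.congr_fun this a
  refine linearMap_ext fun w => ?_
  simp only [LinearMap.comp_apply, LinearMap.add_apply, LinearMap.mulLeft_apply]
  rw [← wordProd_inl_cons, hδ, hδ w, scaleX_wordProd, Finset.mul_sum]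
  refine (Fin.sum_univ_succ _).trans (congrArg₂ _ ?_ (Finset.sum_congr rfl fun k _ => ?_))
  · simp [countY]
  · simp only [List.get_eq_getElem, Fin.val_succ, List.getElem_cons_succ, List.take_succ_cons,
      List.drop_succ_cons, List.set_cons_succ, countY_inl_cons, wordProd_inl_cons]
    cases w[(k : ℕ)] <;> simp

theorem IsDeRham.map_Y_mul (hδ : IsDeRham K q n δ) (i : Fin n) (a : OmegaAlg K q n) :
    δ (Y K q n i * a) = (-q⁻¹) • (Y K q n i * δ a) := by
  suffices δ ∘ₗ LinearMap.mulLeft K (Y K q n i) =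
      (-q⁻¹) • LinearMap.mulLeft K (Y K q n i) ∘ₗ δ from LinearMap.congr_fun this a
  refine linearMap_ext fun w => ?_
  simp only [LinearMap.comp_apply, LinearMap.smul_apply, LinearMap.mulLeft_apply]
  rw [← wordProd_inr_cons, hδ, hδ w, Finset.mul_sum, Finset.smul_sum]
  refine (Fin.sum_univ_succ _).trans
    ((add_eq_right.2 rfl).trans (Finset.sum_congr rfl fun k _ => ?_))
  simp only [List.get_eq_getElem, Fin.val_succ, List.getElem_cons_succ, List.take_succ_cons,
    List.drop_succ_cons, List.set_cons_succ, countY_inr_cons, wordProd_inr_cons]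
  cases w[(k : ℕ)] with
  | inl j => simp only [Sum.elim_inl, mul_smul_comm, smul_smul, pow_succ', mul_assoc]
  | inr j => simp only [Sum.elim_inr, mul_zero, smul_zero]

theorem IsDeRham.map_scaleX (hδ : IsDeRham K q n δ) (hq : q ≠ 0) (a : OmegaAlg K q n) :
    δ (scaleX hq a) = q • scaleX hq (δ a) := by
  suffices δ ∘ₗ scaleX hq = q • scaleX hq ∘ₗ δ from LinearMap.congr_fun this a
  refine linearMap_ext fun w => ?_
  simp only [LinearMap.comp_apply, LinearMap.smul_apply]
  induction w with
  | nil => simp [hδ.map_one]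
  | cons g w ih =>
    cases g with
    | inl i =>
      simp only [wordProd_inl_cons, scaleX_X_mul, scaleX_Y_mul, hδ.map_X_mul hq, map_add, map_smul,
        ih, mul_smul_comm]
    | inr i =>
      simp only [wordProd_inr_cons, scaleX_Y_mul, hδ.map_Y_mul, map_smul, ih, mul_smul_comm]
      module

end DeRham

section Homotopy

/-- The operator `κ δ + (-q⁻¹)² δ κ` of the homotopy formula for the quantum de Rham complex. -/
noncomputable def laplacian (hq : q ≠ 0) (δ : OmegaAlg K q n →ₗ[K] OmegaAlg K q n) :
    OmegaAlg K q n →ₗ[K] OmegaAlg K q n :=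
  koszul hq ∘ₗ δ + (q ^ 2)⁻¹ • δ ∘ₗ koszul hq

variable {δ : OmegaAlg K q n →ₗ[K] OmegaAlg K q n}

theorem laplacian_apply (hq : q ≠ 0) (a : OmegaAlg K q n) :
    laplacian hq δ a = koszul hq (δ a) + (q ^ 2)⁻¹ • δ (koszul hq a) :=
  rfl

theorem laplacian_X_mul (hq : q ≠ 0) (hδ : IsDeRham K q n δ) (i : Fin n) (a : OmegaAlg K q n) :
    laplacian hq δ (X K q n i * a) =
      X K q n i * (scaleX hq (scaleX hq a) + laplacian hq δ a) := by
  simp only [laplacian_apply, hδ.map_X_mul hq, koszul_X_mul, koszul_Y_mul, map_add, scaleX_koszul,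
    mul_add, mul_smul_comm]
  match_scalars <;> field_simp
  ring

theorem laplacian_Y_mul (hq : q ≠ 0) (hδ : IsDeRham K q n δ) (i : Fin n) (a : OmegaAlg K q n) :
    laplacian hq δ (Y K q n i * a) =
      (q ^ 2)⁻¹ • (Y K q n i * (scaleX hq (scaleX hq a) + laplacian hq δ a)) := by
  simp only [laplacian_apply, hδ.map_X_mul hq, hδ.map_Y_mul, koszul_Y_mul, map_add, map_smul,
    hδ.map_scaleX hq, mul_add, mul_smul_comm]
  match_scalars <;> field_simp
  ring

theorem laplacian_wordProd (hq : q ≠ 0) (hδ : IsDeRham K q n δ) (w : List (OmegaLetter n)) :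
    laplacian hq δ (wordProd K q n w) =
      ((q ^ 2)⁻¹ ^ countY n w * ∑ t ∈ Finset.range w.length, (q ^ 2) ^ t) •
        wordProd K q n w := by
  induction w with
  | nil => simp [laplacian_apply, hδ.map_one]
  | cons g w ih =>
    have hsum : scaleX hq (scaleX hq (wordProd K q n w)) + laplacian hq δ (wordProd K q n w) =
        ((q ^ 2)⁻¹ ^ countY n w * ∑ t ∈ Finset.range (w.length + 1), (q ^ 2) ^ t) •
          wordProd K q n w := by
      rw [← countX_add_countY, inv_pow_mul_geom_sum_succ (pow_ne_zero 2 hq), countX_add_countY, ih,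
        scaleX_wordProd, map_smul, scaleX_wordProd, smul_smul, ← mul_pow, ← sq, add_smul]
    cases g with
    | inl i =>
      rw [wordProd_inl_cons, laplacian_X_mul hq hδ, hsum, mul_smul_comm, countY_inl_cons,
        List.length_cons]
    | inr i =>
      rw [wordProd_inr_cons, laplacian_Y_mul hq hδ, hsum, mul_smul_comm, smul_smul,
        countY_inr_cons, List.length_cons, ← mul_assoc, ← pow_succ']

theorem laplacian_of_mem_piece (hq : q ≠ 0) (hδ : IsDeRham K q n δ) {i d : ℕ}
    {a : OmegaAlg K q n} (ha : a ∈ piece K q n i d) :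
    laplacian hq δ a = ((q ^ 2)⁻¹ ^ i * ∑ t ∈ Finset.range d, (q ^ 2) ^ t) • a := by
  set c := (q ^ 2)⁻¹ ^ i * ∑ t ∈ Finset.range d, (q ^ 2) ^ t
  suffices piece K q n i d ≤ LinearMap.eqLocus (laplacian hq δ) (c • LinearMap.id) from this ha
  refine piece_le ?_
  rintro w rfl rfl
  exact laplacian_wordProd hq hδ w

theorem exists_eq_map_smul_koszul (hq : q ≠ 0) (hδ : IsDeRham K q n δ) {i d : ℕ}
    (hd : ∑ t ∈ Finset.range d, (q ^ 2) ^ t ≠ 0) {a : OmegaAlg K q n}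
    (ha : a ∈ piece K q n i d) (hδa : δ a = 0) : ∃ c : K, δ (c • koszul hq a) = a := by
  set c := (q ^ 2)⁻¹ ^ i * ∑ t ∈ Finset.range d, (q ^ 2) ^ t
  have hc : c ≠ 0 := mul_ne_zero (pow_ne_zero _ (inv_ne_zero (pow_ne_zero 2 hq))) hd
  have hhomotopy : (q ^ 2)⁻¹ • δ (koszul hq a) = c • a := by
    rw [← laplacian_of_mem_piece hq hδ ha, laplacian_apply, hδa, map_zero, zero_add]
  refine ⟨c⁻¹ * (q ^ 2)⁻¹, ?_⟩
  rw [map_smul, mul_smul, hhomotopy, inv_smul_smul₀ hc]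

end Homotopy

end OmegaAlg

theorem stmt11_general (K : Type*) [Field K] (q : K) (hq : q ≠ 0) (n d : ℕ)
    (hd : ∑ t ∈ Finset.range d, (q ^ 2) ^ t ≠ 0)
    (δ : OmegaAlg K q n →ₗ[K] OmegaAlg K q n) (hδ : OmegaAlg.IsDeRham K q n δ) :
    (∀ a ∈ OmegaAlg.piece K q n 0 d, δ a = 0 → a = 0) ∧
    ∀ i : ℕ, ∀ a ∈ OmegaAlg.piece K q n (i + 1) d, δ a = 0 →
      ∃ b ∈ OmegaAlg.piece K q n i d, δ b = a := by
  refine ⟨fun a ha hδa => ?_, fun i a ha hδa => ?_⟩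
  · obtain ⟨c, hc⟩ := OmegaAlg.exists_eq_map_smul_koszul hq hδ hd ha hδa
    rw [← hc, OmegaAlg.koszul_eq_zero_of_mem_piece_zero hq ha, smul_zero, map_zero]
  · obtain ⟨c, hc⟩ := OmegaAlg.exists_eq_map_smul_koszul hq hδ hd ha hδa
    exact ⟨c • OmegaAlg.koszul hq a,
      Submodule.smul_mem _ c (OmegaAlg.koszul_mem_piece hq ha), hc⟩

/-- If `d` is not divisible by `ℓ` (where `q` is a primitive `ℓ`-th
root of unity, `ℓ > 1` odd, so that `(d)_{q²} ≠ 0`), then the quantum de Rham complex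
`0 → S_q^d(n) → S_q^{d−1}(n) ⊗ Λ_q^1(n) → ⋯ → Λ_q^d(n) → 0` is exact: the
differential `δ` is injective on `Ω^0_d(n)`, and every cocycle in `Ω^{i+1}_d(n)` is a
coboundary. -/
theorem stmt11 (K : Type*) [Field K] (q : K) (ℓ : ℕ) (hℓ : 1 < ℓ) (hodd : Odd ℓ)
    (hq : IsPrimitiveRoot q ℓ) (n d : ℕ) (hd : ¬ (ℓ ∣ d))
    (δ : OmegaAlg K q n →ₗ[K] OmegaAlg K q n) (hδ : OmegaAlg.IsDeRham K q n δ) :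
    (∀ a ∈ OmegaAlg.piece K q n 0 d, δ a = 0 → a = 0) ∧
    ∀ i : ℕ, ∀ a ∈ OmegaAlg.piece K q n (i + 1) d, δ a = 0 →
      ∃ b ∈ OmegaAlg.piece K q n i d, δ b = a := by
  have hq2 : IsPrimitiveRoot (q ^ 2) ℓ := hq.pow_of_coprime 2 (Nat.coprime_two_left.2 hodd)
  exact stmt11_general K q (hq.ne_zero (by omega)) n d (geom_sum_ne_zero_of_not_dvd hq2 hd) δ hδ
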